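/- For every (t,x) ∈ [a,b) × ℝ one has the explicit formula ∂_x A(t,x) = ( g(t,x) − g(t,−x) ) / ( g(t,x) + g(t,−x) ), and consequently A(t,x) = (1/m') log( g(t,x) + g(t,−x) ). -/

import Mathlib

/-!
Write `s = √(b - t) > 0` and let `φ` be the standard Gaussian density. Splitting the expectation
at `z = -x / s`, where `x + s z` changes sign, and completing the square,
`φ z * exp (± m' s z) = exp (m'² s² / 2) * φ (z ∓ m' s)`, turns the two halves into `g(t, x)` and
`g(t, -x)` (`integral_exp_abs_eq`); taking logarithms gives the formula for `A`.

For the derivative, `∂ₓ g(t, x) = m' g(t, x) + κ(x)` with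
`κ(x) = exp (s² m'² / 2 + m' x) φ (m' s + x / s) / s = exp (-x² / (2 s²)) / (s √(2π))`, an even
function of `x` (`hasDerivAt_gfun`). The `κ` terms therefore cancel in the derivative of
`g(t, x) + g(t, -x)`, which is `m' (g(t, x) - g(t, -x))`.
-/

open MeasureTheory ProbabilityTheory

/-- `A(t,x) = (1/m') log E[exp(m'|x + z√(b-t)|)]` for a standard Gaussian `z`. -/
noncomputable def A (b m' t x : ℝ) : ℝ :=
  (1 / m') * Real.log (∫ z, Real.exp (m' * |x + z * Real.sqrt (b - t)|) ∂(gaussianReal 0 1))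

/-- The standard Gaussian cumulative distribution function. -/
noncomputable def stdGaussCDF (x : ℝ) : ℝ :=
  ∫ u in Set.Iic x, Real.exp (-u ^ 2 / 2) / Real.sqrt (2 * Real.pi)

/-- `g(t,x) = exp((b-t)m'²/2 + m'x) Φ(m'√(b-t) + x/√(b-t))`. -/
noncomputable def gfun (b m' t x : ℝ) : ℝ :=
  Real.exp ((b - t) * m' ^ 2 / 2 + m' * x) *
    stdGaussCDF (m' * Real.sqrt (b - t) + x / Real.sqrt (b - t))

/-- The standard Gaussian density, in the form used by `stdGaussCDF`. -/
noncomputable def stdPhi (u : ℝ) : ℝ := Real.exp (-u ^ 2 / 2) / Real.sqrt (2 * Real.pi)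

lemma stdGaussCDF_eq (x : ℝ) : stdGaussCDF x = ∫ u in Set.Iic x, stdPhi u := rfl

lemma stdPhi_eq_pdf : stdPhi = gaussianPDFReal 0 1 := by
  ext u
  simp [stdPhi, gaussianPDFReal, div_eq_inv_mul]

lemma continuous_stdPhi : Continuous stdPhi := by
  unfold stdPhi
  fun_prop

lemma integrable_stdPhi : Integrable stdPhi := by
  rw [stdPhi_eq_pdf]
  exact integrable_gaussianPDFReal 0 1

lemma stdPhi_pos (u : ℝ) : 0 < stdPhi u := by
  unfold stdPhi
  positivity

lemma stdPhi_neg (u : ℝ) : stdPhi (-u) = stdPhi u := by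
  simp [stdPhi]

lemma stdGaussCDF_pos (x : ℝ) : 0 < stdGaussCDF x := by
  rw [stdGaussCDF_eq, setIntegral_pos_iff_support_of_nonneg_ae
    (Filter.Eventually.of_forall fun u => (stdPhi_pos u).le) integrable_stdPhi.integrableOn]
  have : Function.support stdPhi = Set.univ := by
    ext u
    simp [(stdPhi_pos u).ne']
  simp [this]

lemma hasDerivAt_stdGaussCDF (x : ℝ) : HasDerivAt stdGaussCDF (stdPhi x) x := by
  have h : stdGaussCDF = fun y => stdGaussCDF 0 + ∫ u in (0 : ℝ)..y, stdPhi u := by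
    ext y
    rw [← intervalIntegral.integral_Iic_sub_Iic integrable_stdPhi.integrableOn
      integrable_stdPhi.integrableOn, stdGaussCDF_eq, stdGaussCDF_eq]
    ring
  rw [h]
  exact (continuous_stdPhi.integral_hasStrictDerivAt 0 x).hasDerivAt.const_add _

lemma gfun_pos (b m' t x : ℝ) : 0 < gfun b m' t x :=
  mul_pos (Real.exp_pos _) (stdGaussCDF_pos _)

/-- The second term of the derivative is even in `x`. -/
lemma hasDerivAt_gfun (b m' t x : ℝ) (ht : t < b) :
    HasDerivAt (gfun b m' t)
      (m' * gfun b m' t x + stdPhi (x / Real.sqrt (b - t)) / Real.sqrt (b - t)) x := by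
  have hs : 0 < Real.sqrt (b - t) := Real.sqrt_pos.2 (by linarith)
  have hsq : b - t = Real.sqrt (b - t) ^ 2 := (Real.sq_sqrt (by linarith)).symm
  have h1 : HasDerivAt (fun y => Real.exp ((b - t) * m' ^ 2 / 2 + m' * y))
      (Real.exp ((b - t) * m' ^ 2 / 2 + m' * x) * (m' * 1)) x :=
    (((hasDerivAt_id x).const_mul m').const_add _).exp
  have h2 : HasDerivAt
      (fun y => stdGaussCDF (m' * Real.sqrt (b - t) + y / Real.sqrt (b - t)))
      (stdPhi (m' * Real.sqrt (b - t) + x / Real.sqrt (b - t)) * (1 / Real.sqrt (b - t))) x :=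
    (hasDerivAt_stdGaussCDF _).comp x
      (((hasDerivAt_id x).div_const (Real.sqrt (b - t))).const_add _)
  have key : Real.exp ((b - t) * m' ^ 2 / 2 + m' * x) *
      stdPhi (m' * Real.sqrt (b - t) + x / Real.sqrt (b - t))
      = stdPhi (x / Real.sqrt (b - t)) := by
    unfold stdPhi
    rw [← mul_div_assoc, ← Real.exp_add]
    congr 2
    generalize Real.sqrt (b - t) = s at hs hsq
    rw [hsq]
    field_simp
    ring
  refine (h1.mul h2).congr_deriv ?_
  rw [← key, gfun]
  ring

/-- One half of the expectation: completing the square on `{z ≤ -x / s}`. -/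
lemma integral_Iic_half (m s x : ℝ) :
    ∫ z in Set.Iic (-x / s), stdPhi z * Real.exp (m * -(x + z * s))
      = Real.exp (s ^ 2 * m ^ 2 / 2 + m * -x) * stdGaussCDF (m * s + -x / s) := by
  have h : ∀ z, stdPhi z * Real.exp (m * -(x + z * s))
      = Real.exp (s ^ 2 * m ^ 2 / 2 + m * -x) * stdPhi (z + m * s) := by
    intro z
    unfold stdPhi
    rw [← mul_div_assoc, div_mul_eq_mul_div, ← Real.exp_add, ← Real.exp_add]
    congr 2
    ring
  simp_rw [h]
  rw [integral_const_mul, stdGaussCDF_eq]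
  congr 1
  have hp := (measurePreserving_add_right volume (m * s)).setIntegral_preimage_emb
    (measurableEmbedding_addRight (m * s)) stdPhi (Set.Iic (m * s + -x / s))
  rw [← hp]
  congr 2
  ext z
  simp only [Set.mem_Iic, Set.mem_preimage]
  constructor <;> intro h <;> linarith

lemma integral_exp_abs_eq (b m' t x : ℝ) (ht : t < b) :
    ∫ z, Real.exp (m' * |x + z * Real.sqrt (b - t)|) ∂(gaussianReal 0 1)
      = gfun b m' t x + gfun b m' t (-x) := by
  have hs : 0 < Real.sqrt (b - t) := Real.sqrt_pos.2 (by linarith)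
  have hsq : b - t = Real.sqrt (b - t) ^ 2 := (Real.sq_sqrt (by linarith)).symm
  rw [integral_gaussianReal_eq_integral_smul one_ne_zero, ← stdPhi_eq_pdf]
  simp only [smul_eq_mul, gfun]
  set s := Real.sqrt (b - t) with hsdef
  rw [hsq]
  -- Both exponentials are integrable against `φ`, hence so is `exp (m' |x + z s|)`.
  have hexp : ∀ c d : ℝ, Integrable (fun z => stdPhi z * Real.exp (c + d * z)) := by
    intro c d
    have h : ∀ z, stdPhi z * Real.exp (c + d * z)
        = Real.exp (d ^ 2 / 2 + c) * stdPhi (z + -d) := by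
      intro z
      unfold stdPhi
      rw [← mul_div_assoc, div_mul_eq_mul_div, ← Real.exp_add, ← Real.exp_add]
      congr 2
      ring
    simp_rw [h]
    exact (integrable_stdPhi.comp_add_right (-d)).const_mul _
  have hint : Integrable (fun z => stdPhi z * Real.exp (m' * |x + z * s|)) := by
    refine ((hexp (m' * x) (m' * s)).add (hexp (-(m' * x)) (-(m' * s)))).mono'
      (continuous_stdPhi.mul (by fun_prop)).aestronglyMeasurable
      (Filter.Eventually.of_forall fun z => ?_)
    have hp := stdPhi_pos z
    rw [Real.norm_of_nonneg (by positivity)]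
    simp only [Pi.add_apply]
    rcases abs_cases (x + z * s) with ⟨h, -⟩ | ⟨h, -⟩ <;> rw [h]
    · rw [show m' * (x + z * s) = m' * x + m' * s * z by ring]
      exact le_add_of_nonneg_right (by positivity)
    · rw [show m' * -(x + z * s) = -(m' * x) + -(m' * s) * z by ring]
      exact le_add_of_nonneg_left (by positivity)
  rw [← intervalIntegral.integral_Iic_add_Ioi (b := -x / s) hint.integrableOn hint.integrableOn,
    add_comm]
  congr 1
  -- The reflection `z ↦ -z` reduces the half-line `{z > -x / s}` to `integral_Iic_half`.
  · have hI := integral_Iic_half m' s (-x)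
    rw [neg_neg] at hI
    rw [← hI, neg_div, ← integral_comp_neg_Iic]
    refine setIntegral_congr_fun measurableSet_Iic fun z hz => ?_
    have : z * s ≤ x := (le_div_iff₀ hs).1 hz
    simp only [stdPhi_neg]
    rw [abs_of_nonneg (by linarith)]
    congr 3
    ring
  · rw [← integral_Iic_half m' s x]
    refine setIntegral_congr_fun measurableSet_Iic fun z hz => ?_
    have : z * s ≤ -x := (le_div_iff₀ hs).1 hz
    rw [abs_of_nonpos (by linarith)]

/-- explicit formulas for `∂ₓA` and `A` in terms of `g`. -/
theorem A_deriv_explicit (a b m' : ℝ) (ha : 0 ≤ a) (hab : a < b) (hm' : 0 < m') :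
    ∀ t ∈ Set.Ico a b, ∀ x : ℝ,
      deriv (A b m' t) x
          = (gfun b m' t x - gfun b m' t (-x)) / (gfun b m' t x + gfun b m' t (-x))
      ∧ A b m' t x = (1 / m') * Real.log (gfun b m' t x + gfun b m' t (-x)) := by
  intro t ht x
  have hA : ∀ y, A b m' t y = (1 / m') * Real.log (gfun b m' t y + gfun b m' t (-y)) := by
    intro y
    rw [A, integral_exp_abs_eq b m' t y ht.2]
  refine ⟨?_, hA x⟩
  have hpos : 0 < gfun b m' t x + gfun b m' t (-x) :=
    add_pos (gfun_pos _ _ _ _) (gfun_pos _ _ _ _)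
  have h1 := hasDerivAt_gfun b m' t x ht.2
  have h2 := (hasDerivAt_gfun b m' t (-x) ht.2).scomp x (hasDerivAt_neg x)
  have h3 := ((h1.add h2).log hpos.ne').const_mul (1 / m')
  rw [show A b m' t = fun y => (1 / m') * Real.log (gfun b m' t y + gfun b m' t (-y)) from
    funext hA]
  refine (h3.congr_deriv ?_).deriv
  rw [neg_div, stdPhi_neg]
  simp only [Pi.add_apply, Function.comp_apply, smul_eq_mul]
  field_simp
  ring
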